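/- Let ω be a weight function satisfying: there exists H>0 such that ω(t²)=O(ω(Ht)) as t→∞, and let σ be a general weight function. Then σ(t)=O(ω(t)) as t→∞ if and only if S_{(ω)}(ℝ^d) ⊆ S_{(σ)}(ℝ^d) with continuous inclusion for all dimensions d∈ℕ, where continuity of the inclusion in dimension d means: for every μ>0 there exist ν>0 and C≥1 such that q_{σ,μ}(f) ≤ C·q_{ω,ν}(f) for every f∈S_{(ω)}(ℝ^d), with q_{ω,ν}(f):=sup_{α,β∈ℕ_0^d} sup_{x∈ℝ^d} |x^α ∂^β f(x)|·exp(−(1/ν)φ*_ω(ν|α+β|)). The implication from σ=O(ω) to the continuous inclusions holds for arbitrary general weight functions, and for the converse only the continuous inclusion in dimension d=1 is required. -/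

import Mathlib

/-!
If `σ ≤ K ω + K`, then `φ*_σ (s) ≥ K φ*_ω (s / K) - K`, so the weights of `ω` with parameter
`μ / K` are dominated by those of `σ` with parameter `μ` (`wWeight_le_of_bound`); this gives the
inclusion and its continuity in every dimension.

For the converse in dimension one, the continuity estimate with `μ = 1` is tested on the Gaussians
`exp (-(x - a) ^ 2 / 2)`, `a > 1`. The square condition together with `ω = O(t²)` forces
`ω(t) = O(√t)` (`IsWeightFun.isLittleO_id`), so that all weights of `ω` grow faster than `2 ^ n n!`
(`IsGenWeightFun.exists_factorial_le`); the Gaussians therefore lie in the class of `ω`, and their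
`ν`-seminorm is at most `K exp (ω (2 a) / ν)` (`IsGenWeightFun.exists_gaussTrans_bound`), which
condition (α) compares with `ω a`. On the other side, evaluating at `x = a` without derivatives
bounds the seminorm of `σ` from below by `sup_k a ^ k exp (-φ*_σ (k))`. By convexity of
`t ↦ σ (e ^ t)`, taking for `k` the integer part of a subgradient at `log a` shows that this is at
least `exp (σ a - log a)` (`IsGenWeightFun.exists_nat_le`). Taking logarithms and absorbing `log a`
by condition (γ) gives `σ = O(ω)`.
-/


open Filter Asymptotics

noncomputable section

/-- Partial derivative operator in coordinate `i`. -/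
def pderivOp {d : ℕ} (i : Fin d) (f : (Fin d → ℝ) → ℝ) : (Fin d → ℝ) → ℝ :=
  fun x => fderiv ℝ f x (Pi.single i 1)

/-- Iterated partial derivative `∂^β f` for a multi-index `β`. -/
def mderiv {d : ℕ} (β : Fin d → ℕ) (f : (Fin d → ℝ) → ℝ) : (Fin d → ℝ) → ℝ :=
  (List.finRange d).foldr (fun i g => (pderivOp i)^[β i] g) f

/-- The monomial `x^α` for a multi-index `α`. -/
def mpow {d : ℕ} (x : Fin d → ℝ) (α : Fin d → ℕ) : ℝ := ∏ i, x i ^ α i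

/-- The length `|α| = α 0 + ⋯ + α (d-1)` of a multi-index. -/
def msize {d : ℕ} (α : Fin d → ℕ) : ℕ := ∑ i, α i

/-- Young conjugate `φ*_ω(s) = sup_{t ≥ 0} (s·t − ω(e^t))`. -/
def youngConj (ω : ℝ → ℝ) (s : ℝ) : ℝ :=
  sSup {y : ℝ | ∃ t : ℝ, 0 ≤ t ∧ y = s * t - ω (Real.exp t)}

/-- A general weight function: continuous, increasing, `ω:[0,∞)→[0,∞)`, with
conditions (α), (γ), (δ) (condition (β) is not required). -/
structure IsGenWeightFun (ω : ℝ → ℝ) : Prop where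
  nonneg : ∀ t, 0 ≤ t → 0 ≤ ω t
  continuous : ContinuousOn ω (Set.Ici 0)
  mono : MonotoneOn ω (Set.Ici 0)
  alpha : ∃ L : ℝ, 1 ≤ L ∧ ∀ t, 0 ≤ t → ω (2 * t) ≤ L * (ω t + 1)
  gamma : Real.log =o[Filter.atTop] ω
  delta : ConvexOn ℝ (Set.Ici 0) fun t => ω (Real.exp t)

/-- A weight function: a general weight function which moreover satisfies
(β): `ω(t) = O(t²)` as `t → ∞`. -/
structure IsWeightFun (ω : ℝ → ℝ) extends IsGenWeightFun ω : Prop where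
  beta : ω =O[Filter.atTop] fun t : ℝ => t ^ 2

/-- The weight `exp((1/l)·φ*_ω(l·k))`. -/
def wWeight (ω : ℝ → ℝ) (l : ℝ) (k : ℕ) : ℝ :=
  Real.exp (1 / l * youngConj ω (l * (k : ℝ)))

/-- Roumieu Gelfand–Shilov class `S_{{ω}}(ℝ^d)`. -/
def SRoumieuW (ω : ℝ → ℝ) (d : ℕ) : Set ((Fin d → ℝ) → ℝ) :=
  {f | ContDiff ℝ (⊤ : ℕ∞) f ∧ ∃ l > 0, ∃ C > 0, ∀ α β : Fin d → ℕ, ∀ x : Fin d → ℝ,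
    |mpow x α * mderiv β f x| ≤ C * wWeight ω l (msize α + msize β)}

/-- Beurling Gelfand–Shilov class `S_{(ω)}(ℝ^d)`. -/
def SBeurlingW (ω : ℝ → ℝ) (d : ℕ) : Set ((Fin d → ℝ) → ℝ) :=
  {f | ContDiff ℝ (⊤ : ℕ∞) f ∧ ∀ l > 0, ∃ C > 0, ∀ α β : Fin d → ℕ, ∀ x : Fin d → ℝ,
    |mpow x α * mderiv β f x| ≤ C * wWeight ω l (msize α + msize β)}

/-- Continuity of the inclusion `S_(ω)(ℝ^d) ⊆ S_(σ)(ℝ^d)`: for every `μ > 0` there are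
`ν > 0` and `C ≥ 1` with `q_{σ,μ}(f) ≤ C · q_{ω,ν}(f)` for all `f ∈ S_(ω)(ℝ^d)`,
expressed via bounding constants. -/
def contIncBW (ω σ : ℝ → ℝ) (d : ℕ) : Prop :=
  ∀ μ > 0, ∃ ν > 0, ∃ C : ℝ, 1 ≤ C ∧ ∀ f ∈ SBeurlingW ω d, ∀ D : ℝ, 0 ≤ D →
    (∀ α β : Fin d → ℕ, ∀ x : Fin d → ℝ,
      |mpow x α * mderiv β f x| ≤ D * wWeight ω ν (msize α + msize β)) →
    (∀ α β : Fin d → ℕ, ∀ x : Fin d → ℝ,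
      |mpow x α * mderiv β f x| ≤ C * D * wWeight σ μ (msize α + msize β))

/-- `M ∈ LC`: normalized, log-convex, with `M_p^{1/p} → ∞`. -/
structure IsLC (M : ℕ → ℝ) : Prop where
  pos : ∀ p, 0 < M p
  norm0 : M 0 = 1
  norm1 : 1 ≤ M 1
  logConvex : ∀ p : ℕ, M (p + 1) ^ 2 ≤ M p * M (p + 2)
  root_tendsto : Filter.Tendsto (fun p : ℕ => M p ^ (1 / (p : ℝ))) Filter.atTop Filter.atTop

/-- `M ⪯ N`: `∃ C ≥ 1, ∀ p, M_p ≤ C^p N_p`. -/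
def seqPreceq (M N : ℕ → ℝ) : Prop := ∃ C : ℝ, 1 ≤ C ∧ ∀ p : ℕ, M p ≤ C ^ p * N p

/-- `M ◁ N`: `(M_p/N_p)^{1/p} → 0`. -/
def seqLtriangle (M N : ℕ → ℝ) : Prop :=
  Filter.Tendsto (fun p : ℕ => (M p / N p) ^ (1 / (p : ℝ))) Filter.atTop (nhds 0)

/-- `‖f‖_{∞,M,h} ≤ C`, expressed pointwise. -/
def seqBound {d : ℕ} (M : ℕ → ℝ) (h C : ℝ) (f : (Fin d → ℝ) → ℝ) : Prop :=
  ∀ α β : Fin d → ℕ, ∀ x : Fin d → ℝ,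
    |mpow x α * mderiv β f x| ≤ C * h ^ (msize α + msize β) * M (msize α + msize β)

/-- Roumieu class `S_{{M}}(ℝ^d)` for a single weight sequence. -/
def SRoumieuSeq (M : ℕ → ℝ) (d : ℕ) : Set ((Fin d → ℝ) → ℝ) :=
  {f | ContDiff ℝ (⊤ : ℕ∞) f ∧ ∃ C > 0, ∃ h > 0, seqBound M h C f}

/-- Beurling class `S_(M)(ℝ^d)` for a single weight sequence. -/
def SBeurlingSeq (M : ℕ → ℝ) (d : ℕ) : Set ((Fin d → ℝ) → ℝ) :=
  {f | ContDiff ℝ (⊤ : ℕ∞) f ∧ ∀ h > 0, ∃ C > 0, seqBound M h C f}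

/-- Moderate growth (M2). -/
def condM2 (M : ℕ → ℝ) : Prop := ∃ C : ℝ, 1 ≤ C ∧ ∀ p q : ℕ, M (p + q) ≤ C ^ (p + q) * M p * M q

/-- Derivation closedness (M2'). -/
def condM2' (M : ℕ → ℝ) : Prop := ∃ D : ℝ, 1 ≤ D ∧ ∀ p : ℕ, M (p + 1) ≤ D ^ (p + 1) * M p

/-- Condition (12L2R) for a single sequence. -/
def cond12L2Rseq (M : ℕ → ℝ) : Prop :=
  ∃ B > 0, ∃ C > 0, ∃ H > 0, ∀ p q : ℕ,
    (p : ℝ) ^ ((p : ℝ) / 2) * M q ≤ B * C ^ p * H ^ (p + q) * M (p + q)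

/-- Condition (12L2B) for a single sequence. -/
def cond12L2Bseq (M : ℕ → ℝ) : Prop :=
  ∃ H > 0, ∀ C > 0, ∃ B > 0, ∀ p q : ℕ,
    (p : ℝ) ^ ((p : ℝ) / 2) * M q ≤ B * C ^ p * H ^ (p + q) * M (p + q)

/-- Non-quasianalyticity of a weight sequence: `∑ M_{p-1}/M_p < ∞`. -/
def nonQA (M : ℕ → ℝ) : Prop := Summable fun p : ℕ => M p / M (p + 1)

/-- Continuity of the inclusion `S_(M)(ℝ^d) ⊆ S_(N)(ℝ^d)` for single sequences. -/
def contIncBSeq (M N : ℕ → ℝ) (d : ℕ) : Prop :=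
  ∀ h > 0, ∃ h' > 0, ∃ C : ℝ, 1 ≤ C ∧ ∀ f ∈ SBeurlingSeq M d, ∀ D : ℝ, 0 ≤ D →
    seqBound M h' D f → seqBound N h (C * D) f

/-- A weight matrix: positive normalized sequences, pointwise nondecreasing in the index. -/
def IsWeightMatrix (M : ℝ → ℕ → ℝ) : Prop :=
  (∀ l, 0 < l → (∀ p, 0 < M l p) ∧ M l 0 = 1) ∧
    ∀ l k, 0 < l → l ≤ k → ∀ p, M l p ≤ M k p

/-- Standard log-convexity of a weight matrix. -/
def StdLogConvex (M : ℝ → ℕ → ℝ) : Prop := ∀ l, 0 < l → IsLC (M l)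

/-- Roumieu class `S_{{𝓜}}(ℝ^d)` for a weight matrix. -/
def SRoumieuMat (M : ℝ → ℕ → ℝ) (d : ℕ) : Set ((Fin d → ℝ) → ℝ) :=
  {f | ∃ l > 0, f ∈ SRoumieuSeq (M l) d}

/-- Beurling class `S_(𝓜)(ℝ^d)` for a weight matrix. -/
def SBeurlingMat (M : ℝ → ℕ → ℝ) (d : ℕ) : Set ((Fin d → ℝ) → ℝ) :=
  {f | ∀ l > 0, f ∈ SBeurlingSeq (M l) d}

/-- `𝓜{⪯}𝓝`. -/
def matPreceqR (M N : ℝ → ℕ → ℝ) : Prop := ∀ l > 0, ∃ k > 0, seqPreceq (M l) (N k)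

/-- `𝓜(⪯)𝓝`. -/
def matPreceqB (M N : ℝ → ℕ → ℝ) : Prop := ∀ l > 0, ∃ k > 0, seqPreceq (M k) (N l)

/-- `𝓜 ◁ 𝓝`. -/
def matLtriangle (M N : ℝ → ℕ → ℝ) : Prop := ∀ l > 0, ∀ k > 0, seqLtriangle (M l) (N k)

/-- Condition (12L2R) for a weight matrix (Roumieu). -/
def cond12L2RMat (M : ℝ → ℕ → ℝ) : Prop :=
  ∀ l > 0, ∃ k, l ≤ k ∧ ∃ B > 0, ∃ C > 0, ∃ H > 0, ∀ p q : ℕ,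
    (p : ℝ) ^ ((p : ℝ) / 2) * M l q ≤ B * C ^ p * H ^ (p + q) * M k (p + q)

/-- Condition (M2')_R for a weight matrix (Roumieu). -/
def condM2'RMat (M : ℝ → ℕ → ℝ) : Prop :=
  ∀ l > 0, ∃ k, l ≤ k ∧ ∃ A : ℝ, 1 ≤ A ∧ ∀ p : ℕ, M l (p + 1) ≤ A ^ (p + 1) * M k p

/-- Condition (12L2B) for a weight matrix (Beurling). -/
def cond12L2BMat (M : ℝ → ℕ → ℝ) : Prop :=
  ∀ l > 0, ∃ k, 0 < k ∧ k ≤ l ∧ ∃ H > 0, ∀ C > 0, ∃ B > 0, ∀ p q : ℕ,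
    (p : ℝ) ^ ((p : ℝ) / 2) * M k q ≤ B * C ^ p * H ^ (p + q) * M l (p + q)

/-- Condition (M2')_B for a weight matrix (Beurling). -/
def condM2'BMat (M : ℝ → ℕ → ℝ) : Prop :=
  ∀ l > 0, ∃ k, 0 < k ∧ k ≤ l ∧ ∃ A : ℝ, 1 ≤ A ∧ ∀ p : ℕ, M k (p + 1) ≤ A ^ (p + 1) * M l p

/-- Continuity of the inclusion `S_(𝓜)(ℝ^d) ⊆ S_(𝓝)(ℝ^d)` for weight matrices. -/
def contIncBMat (M N : ℝ → ℕ → ℝ) (d : ℕ) : Prop :=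
  ∀ l > 0, ∀ h > 0, ∃ k > 0, ∃ h' > 0, ∃ C : ℝ, 1 ≤ C ∧
    ∀ f ∈ SBeurlingMat M d, ∀ D : ℝ, 0 ≤ D →
      seqBound (M k) h' D f → seqBound (N l) h (C * D) f

/-- Associated function `ω_M(t) = sup_p log(t^p / M_p)`. -/
def assocFun (M : ℕ → ℝ) (t : ℝ) : ℝ :=
  sSup {y : ℝ | ∃ p : ℕ, y = Real.log (t ^ p / M p)}

/-- Condition (α) for a function. -/
def condAlpha (ω : ℝ → ℝ) : Prop := ∃ L : ℝ, 1 ≤ L ∧ ∀ t, 0 ≤ t → ω (2 * t) ≤ L * (ω t + 1)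

/-- Condition (ω6): `∃ H ≥ 1, ∀ t ≥ 0, 2ω(t) ≤ ω(Ht) + H`. -/
def condOmega6 (ω : ℝ → ℝ) : Prop := ∃ H : ℝ, 1 ≤ H ∧ ∀ t, 0 ≤ t → 2 * ω t ≤ ω (H * t) + H

/-- The sequence `W^{(λ)}_p = exp((1/λ)φ*_ω(λ p))`. -/
def wSeq (ω : ℝ → ℝ) (l : ℝ) (p : ℕ) : ℝ := Real.exp (1 / l * youngConj ω (l * (p : ℝ)))

end

/-! ### Young conjugates and weights -/

/-- Every general weight function dominates `log`, so the supremum defining the Young conjugate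
is a genuine one and never the junk value of an unbounded `sSup`. -/
lemma IsGenWeightFun.bddAbove {ω : ℝ → ℝ} (h : IsGenWeightFun ω) (s : ℝ) :
    BddAbove {y : ℝ | ∃ t : ℝ, 0 ≤ t ∧ y = s * t - ω (Real.exp t)} := by
  have h1 := h.gamma.bound (show (0 : ℝ) < 1 / (|s| + 1) by positivity)
  obtain ⟨X, hX⟩ := Filter.eventually_atTop.1 h1
  refine ⟨|s| * |X|, ?_⟩
  rintro _ ⟨t, ht, rfl⟩
  have hω := h.nonneg (Real.exp t) (Real.exp_pos t).le
  have hst : s * t ≤ |s| * t := mul_le_mul_of_nonneg_right (le_abs_self s) ht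
  rcases le_total X (Real.exp t) with hx | hx
  · have h2 := hX _ hx
    rw [Real.log_exp, Real.norm_of_nonneg ht, Real.norm_of_nonneg hω, div_mul_eq_mul_div, one_mul,
      le_div_iff₀ (by positivity)] at h2
    have : 0 ≤ |s| * |X| := by positivity
    nlinarith
  · have h2 : t ≤ |X| := by
      have := Real.add_one_le_exp t
      have := le_abs_self X
      linarith
    have := mul_le_mul_of_nonneg_left h2 (abs_nonneg s)
    linarith

lemma IsGenWeightFun.le_youngConj {ω : ℝ → ℝ} (h : IsGenWeightFun ω) (s : ℝ) {t : ℝ}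
    (ht : 0 ≤ t) : s * t - ω (Real.exp t) ≤ youngConj ω s :=
  le_csSup (h.bddAbove s) ⟨t, ht, rfl⟩

lemma youngConj_le {ω : ℝ → ℝ} {s B : ℝ}
    (hB : ∀ t, 0 ≤ t → s * t - ω (Real.exp t) ≤ B) : youngConj ω s ≤ B := by
  refine csSup_le ⟨_, 0, le_rfl, rfl⟩ ?_
  rintro _ ⟨t, ht, rfl⟩
  exact hB t ht

lemma wWeight_pos (ω : ℝ → ℝ) (l : ℝ) (k : ℕ) : 0 < wWeight ω l k := Real.exp_pos _

lemma IsGenWeightFun.pow_le_wWeight {ω : ℝ → ℝ} (h : IsGenWeightFun ω) {l x : ℝ} (hl : 0 < l)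
    (hx : 1 ≤ x) (k : ℕ) : x ^ k ≤ Real.exp (ω x / l) * wWeight ω l k := by
  have hx0 : 0 < x := by linarith
  have h1 := h.le_youngConj (l * k) (Real.log_nonneg hx)
  rw [Real.exp_log hx0] at h1
  rw [wWeight, ← Real.exp_add, ← Real.exp_log (pow_pos hx0 k), Real.log_pow, Real.exp_le_exp]
  calc (k : ℝ) * Real.log x = ω x / l + 1 / l * (l * k * Real.log x - ω x) := by
        field_simp; ring
    _ ≤ _ := by gcongr

lemma IsGenWeightFun.youngConj_add {ω : ℝ → ℝ} (h : IsGenWeightFun ω) {s t : ℝ} (hs : 0 ≤ s)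
    (ht : 0 ≤ t) : youngConj ω s + youngConj ω t ≤ youngConj ω (s + t) := by
  rw [← le_sub_iff_add_le]
  refine youngConj_le fun u hu => ?_
  rw [le_sub_comm]
  refine youngConj_le fun v hv => ?_
  have hu' := h.nonneg _ (Real.exp_pos u).le
  have hv' := h.nonneg _ (Real.exp_pos v).le
  -- Only the larger of the two points is needed on the right, the other value of `ω` being `≥ 0`.
  rcases le_total u v with huv | huv
  · have := h.le_youngConj (s + t) hv
    nlinarith
  · have := h.le_youngConj (s + t) hu
    nlinarith

lemma IsGenWeightFun.wWeight_mul_le {ω : ℝ → ℝ} (h : IsGenWeightFun ω) {l : ℝ} (hl : 0 < l)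
    (j k : ℕ) : wWeight ω l j * wWeight ω l k ≤ wWeight ω l (j + k) := by
  rw [wWeight, wWeight, wWeight, ← Real.exp_add, Real.exp_le_exp, ← mul_add]
  have := h.youngConj_add (s := l * j) (t := l * k) (by positivity) (by positivity)
  push_cast
  rw [mul_add l]
  gcongr

/-- At an integer `k`, namely the integer part of a subgradient, the biconjugate inequality is
attained up to a loss of `log a`. -/
lemma IsGenWeightFun.exists_nat_le {σ : ℝ → ℝ} (h : IsGenWeightFun σ) {a : ℝ} (ha : 1 < a) :
    ∃ k : ℕ, σ a - Real.log a ≤ k * Real.log a - youngConj σ k := by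
  set τ := Real.log a with hτ
  have hτ0 : 0 < τ := Real.log_pos ha
  have ea : Real.exp τ = a := Real.exp_log (by linarith)
  set φ : ℝ → ℝ := fun t => σ (Real.exp t) with hφ
  have hc : ConvexOn ℝ (Set.Ici 0) φ := h.delta
  have hint : τ ∈ interior (Set.Ici (0 : ℝ)) := by rw [interior_Ici]; exact hτ0
  set s := derivWithin φ (Set.Ioi τ) τ with hs
  have hlr := hc.leftDeriv_le_rightDeriv_of_mem_interior hint
  have hsub : ∀ u, 0 ≤ u → φ τ + s * (u - τ) ≤ φ u := by
    intro u hu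
    rcases lt_trichotomy u τ with hut | rfl | hut
    · have := (hc.slope_le_leftDeriv_of_mem_interior (x := u) hu hint hut).trans hlr
      rw [slope_def_field, div_le_iff₀ (by linarith)] at this
      nlinarith
    · simp
    · have := hc.rightDeriv_le_slope_of_mem_interior hint (y := u) hu hut
      rw [slope_def_field, le_div_iff₀ (by linarith)] at this
      linarith
  have hs0 : 0 ≤ s := by
    have h0 := (hc.slope_le_leftDeriv_of_mem_interior (x := 0) Set.self_mem_Ici hint hτ0).trans hlr
    refine le_trans ?_ h0
    rw [slope_def_field]
    refine div_nonneg (sub_nonneg.2 ?_) (by linarith)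
    exact h.mono (Real.exp_pos _).le (Real.exp_pos _).le (Real.exp_le_exp.2 hτ0.le)
  refine ⟨⌊s⌋₊, ?_⟩
  have hk1 : (⌊s⌋₊ : ℝ) ≤ s := Nat.floor_le hs0
  have hk2 : s < ⌊s⌋₊ + 1 := Nat.lt_floor_add_one s
  have hy : youngConj σ ⌊s⌋₊ ≤ s * τ - φ τ := by
    refine youngConj_le fun u hu => ?_
    have h1 := hsub u hu
    have h2 := mul_le_mul_of_nonneg_right hk1 hu
    have h3 : φ u = σ (Real.exp u) := rfl
    linarith
  have h3 : φ τ = σ a := by simp [hφ, ea]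
  nlinarith

/-! ### Domination of weights gives the inclusion -/

lemma IsGenWeightFun.bound_of_isBigO {ω σ : ℝ → ℝ} (hω : IsGenWeightFun ω) (hσ : IsGenWeightFun σ)
    (hO : σ =O[atTop] ω) : ∃ K : ℝ, 0 < K ∧ ∀ x, 0 ≤ x → σ x ≤ K * ω x + K := by
  obtain ⟨c, hc⟩ := hO.bound
  obtain ⟨X, hX⟩ := Filter.eventually_atTop.1 hc
  refine ⟨|c| + σ |X| + 1, ?_, fun x hx => ?_⟩
  · have := hσ.nonneg |X| (abs_nonneg X)
    positivity
  have h0 := hσ.nonneg |X| (abs_nonneg X)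
  have h1 := hω.nonneg x hx
  have h2 := abs_nonneg c
  rcases le_total X x with hxX | hxX
  · have := hX x hxX
    rw [Real.norm_of_nonneg h1, Real.norm_of_nonneg (hσ.nonneg x hx)] at this
    nlinarith [le_abs_self c]
  · have := hσ.mono hx (abs_nonneg X) (hxX.trans (le_abs_self X))
    nlinarith

lemma wWeight_le_of_bound {ω σ : ℝ → ℝ} (hσ : IsGenWeightFun σ)
    {K : ℝ} (hK : 0 < K) (h : ∀ x, 0 ≤ x → σ x ≤ K * ω x + K) {μ : ℝ} (hμ : 0 < μ) (k : ℕ) :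
    wWeight ω (μ / K) k ≤ Real.exp (K / μ) * wWeight σ μ k := by
  rw [wWeight, wWeight, ← Real.exp_add, Real.exp_le_exp]
  have h1 : youngConj ω (μ / K * k) ≤ (youngConj σ (μ * k) + K) / K := by
    refine youngConj_le fun t ht => ?_
    have h2 := hσ.le_youngConj (μ * k) ht
    have h3 := h _ (Real.exp_pos t).le
    rw [le_div_iff₀ hK]
    calc (μ / K * k * t - ω (Real.exp t)) * K = μ * k * t - K * ω (Real.exp t) := by
          field_simp
      _ ≤ _ := by linarith
  calc 1 / (μ / K) * youngConj ω (μ / K * k)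
      ≤ 1 / (μ / K) * ((youngConj σ (μ * k) + K) / K) := by gcongr
    _ = K / μ + 1 / μ * youngConj σ (μ * k) := by field_simp; ring

lemma inclusion_of_isBigO {ω σ : ℝ → ℝ} (hω : IsGenWeightFun ω) (hσ : IsGenWeightFun σ)
    (hO : σ =O[atTop] ω) (d : ℕ) : SBeurlingW ω d ⊆ SBeurlingW σ d ∧ contIncBW ω σ d := by
  obtain ⟨K, hK, hb⟩ := hω.bound_of_isBigO hσ hO
  constructor
  · rintro f ⟨hf, hf2⟩
    refine ⟨hf, fun μ hμ => ?_⟩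
    obtain ⟨C, hC, h⟩ := hf2 (μ / K) (by positivity)
    refine ⟨C * Real.exp (K / μ), by positivity, fun α β x => (h α β x).trans ?_⟩
    rw [mul_assoc]
    exact mul_le_mul_of_nonneg_left (wWeight_le_of_bound hσ hK hb hμ _) hC.le
  · intro μ hμ
    refine ⟨μ / K, by positivity, Real.exp (K / μ), Real.one_le_exp (by positivity), ?_⟩
    intro f _ D hD h α β x
    refine (h α β x).trans ?_
    rw [mul_comm (Real.exp _), mul_assoc]
    exact mul_le_mul_of_nonneg_left (wWeight_le_of_bound hσ hK hb hμ _) hD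

/-! ### The Gaussian and its derivatives -/

/-- The `n`-th derivative of the Gaussian `y ↦ exp (-y ^ 2 / 2)`, defined through the
three-term recurrence obtained by differentiating `g' = -y g`. -/
noncomputable def gaussD : ℕ → ℝ → ℝ
  | 0 => fun y => Real.exp (-y ^ 2 / 2)
  | 1 => fun y => -y * Real.exp (-y ^ 2 / 2)
  | n + 2 => fun y => -y * gaussD (n + 1) y - (n + 1) * gaussD n y

lemma hasDerivAt_gaussD : ∀ (n : ℕ) (y : ℝ), HasDerivAt (gaussD n) (gaussD (n + 1) y) y
  | 0, y => by
    have h : HasDerivAt (fun y : ℝ => -y ^ 2 / 2) (-y) y := by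
      have := ((hasDerivAt_pow 2 y).neg).div_const 2
      refine this.congr_deriv ?_
      push_cast
      ring
    exact h.exp.congr_deriv (by simp only [gaussD]; ring)
  | 1, y => by
    have h0 := hasDerivAt_gaussD 0 y
    have := (hasDerivAt_id y).neg.mul h0
    refine this.congr_deriv ?_
    simp [gaussD]
    ring
  | n + 2, y => by
    have h0 := hasDerivAt_gaussD n y
    have h1 := hasDerivAt_gaussD (n + 1) y
    have := ((hasDerivAt_id y).neg.mul h1).sub (h0.const_mul ((n : ℝ) + 1))
    refine this.congr_deriv ?_
    have e : gaussD (n + 3) y = -y * gaussD (n + 2) y - ((n + 1 : ℕ) + 1) * gaussD (n + 1) y := rfl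
    change _ = gaussD (n + 3) y
    rw [e]
    simp only [Pi.neg_apply, id]
    push_cast
    ring

lemma contDiff_gaussD_zero : ContDiff ℝ (⊤ : ℕ∞) (gaussD 0) := by
  unfold gaussD
  fun_prop

/-- A crude factorial bound, by two-step induction on the order of the derivative. The base case
is `|y| ^ α ≤ α! * exp |y|`. -/
lemma abs_pow_mul_gaussD_le : ∀ (β α : ℕ) (y : ℝ),
    |y| ^ α * |gaussD β y| ≤ 2 * 2 ^ β * (α + β).factorial
  | 0, α, y => by
    have h1 := Real.pow_div_factorial_le_exp |y| (abs_nonneg y) α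
    rw [div_le_iff₀ (by positivity)] at h1
    have h2 : Real.exp |y| * Real.exp (-y ^ 2 / 2) ≤ 2 := by
      rw [← Real.exp_add]
      have h3 : |y| + -y ^ 2 / 2 ≤ 1 / 2 := by nlinarith [sq_nonneg (|y| - 1), sq_abs y]
      refine (Real.exp_le_exp.2 h3).trans ?_
      have h4 : Real.exp (1 / 2) ^ 2 ≤ 2 ^ 2 := by
        rw [← Real.exp_nat_mul]
        have := Real.exp_one_lt_d9
        norm_num
        linarith
      exact (pow_le_pow_iff_left₀ (Real.exp_pos _).le (by norm_num) (by norm_num)).1 h4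
    have e : |gaussD 0 y| = Real.exp (-y ^ 2 / 2) := abs_of_pos (Real.exp_pos _)
    rw [e]
    calc |y| ^ α * Real.exp (-y ^ 2 / 2)
        ≤ (Real.exp |y| * α.factorial) * Real.exp (-y ^ 2 / 2) := by gcongr
      _ = (Real.exp |y| * Real.exp (-y ^ 2 / 2)) * α.factorial := by ring
      _ ≤ 2 * α.factorial := by gcongr
      _ = _ := by simp
  | 1, α, y => by
    have h := abs_pow_mul_gaussD_le 0 (α + 1) y
    have e : |gaussD 1 y| = |y| * |gaussD 0 y| := by
      simp [gaussD, abs_mul]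
    rw [e, ← mul_assoc, ← pow_succ]
    refine h.trans ?_
    simp only [add_zero]
    gcongr <;> norm_num
  | n + 2, α, y => by
    have h1 := abs_pow_mul_gaussD_le (n + 1) (α + 1) y
    have h0 := abs_pow_mul_gaussD_le n α y
    have e : |gaussD (n + 2) y| ≤ |y| * |gaussD (n + 1) y| + (n + 1) * |gaussD n y| := by
      have : gaussD (n + 2) y = -y * gaussD (n + 1) y - (n + 1) * gaussD n y := rfl
      rw [this]
      refine (abs_sub _ _).trans ?_
      rw [abs_mul, abs_mul, abs_neg, abs_of_pos (show (0 : ℝ) < n + 1 by positivity)]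
    have hf : ((n : ℝ) + 1) * (α + n).factorial ≤ (α + (n + 2)).factorial := by
      have h2 : (n + 1) * (α + n).factorial ≤ (α + n + 1).factorial := by
        rw [Nat.factorial_succ]
        gcongr
        omega
      exact_mod_cast h2.trans (Nat.factorial_le (by omega))
    have hc : α + 1 + (n + 1) = α + (n + 2) := by ring
    rw [hc] at h1
    have hF : (0 : ℝ) ≤ (α + (n + 2)).factorial := by positivity
    have h2n : (0 : ℝ) < 2 ^ n := by positivity
    calc |y| ^ α * |gaussD (n + 2) y|
        ≤ |y| ^ α * (|y| * |gaussD (n + 1) y| + (n + 1) * |gaussD n y|) := by gcongr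
      _ = |y| ^ (α + 1) * |gaussD (n + 1) y| + (n + 1) * (|y| ^ α * |gaussD n y|) := by ring
      _ ≤ 2 * 2 ^ (n + 1) * (α + (n + 2)).factorial
          + (n + 1) * (2 * 2 ^ n * (α + n).factorial) := by gcongr
      _ = 2 * 2 ^ (n + 1) * (α + (n + 2)).factorial
          + 2 * 2 ^ n * (((n : ℝ) + 1) * (α + n).factorial) := by ring
      _ ≤ 2 * 2 ^ (n + 1) * (α + (n + 2)).factorial
          + 2 * 2 ^ n * (α + (n + 2)).factorial := by gcongr
      _ ≤ 2 * 2 ^ (n + 2) * (α + (n + 2)).factorial := by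
        rw [pow_succ 2 (n + 1), pow_succ 2 n]
        nlinarith [mul_nonneg h2n.le hF]

/-- The translate `exp (-(x - a) ^ 2 / 2)`, as a function on `Fin 1 → ℝ`. -/
noncomputable def gaussTrans (a : ℝ) : (Fin 1 → ℝ) → ℝ := fun x => gaussD 0 (x 0 - a)

lemma pderivOp_gaussD (a : ℝ) (n : ℕ) :
    pderivOp 0 (fun x : Fin 1 → ℝ => gaussD n (x 0 - a)) = fun x => gaussD (n + 1) (x 0 - a) := by
  funext x
  have h1 : HasFDerivAt (fun x : Fin 1 → ℝ => x 0 - a)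
      (ContinuousLinearMap.proj (R := ℝ) (φ := fun _ : Fin 1 => ℝ) 0) x :=
    (hasFDerivAt_apply (𝕜 := ℝ) (0 : Fin 1) x).sub_const a
  have h2 := (hasDerivAt_gaussD n (x 0 - a)).comp_hasFDerivAt x h1
  have h3 : (fun x : Fin 1 → ℝ => gaussD n (x 0 - a)) = gaussD n ∘ fun x : Fin 1 → ℝ => x 0 - a :=
    rfl
  rw [pderivOp, h3, h2.fderiv]
  simp

lemma mderiv_gaussTrans (a : ℝ) (β : Fin 1 → ℕ) :
    mderiv β (gaussTrans a) = fun x => gaussD (β 0) (x 0 - a) := by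
  have h : ∀ n : ℕ, (pderivOp (0 : Fin 1))^[n] (gaussTrans a) = fun x => gaussD n (x 0 - a) := by
    intro n
    induction n with
    | zero => rfl
    | succ n ih => rw [Function.iterate_succ_apply', ih, pderivOp_gaussD]
  simp [mderiv, List.finRange_succ, h]

lemma contDiff_gaussTrans (a : ℝ) : ContDiff ℝ (⊤ : ℕ∞) (gaussTrans a) := by
  unfold gaussTrans
  exact contDiff_gaussD_zero.comp ((contDiff_apply ℝ ℝ (0 : Fin 1)).sub contDiff_const)

/-! ### Seminorms of translated Gaussians -/

/-- Two applications of the square condition to `ω = O(t²)` give first `ω = O(t)` and then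
`ω = O(√t)`. -/
lemma IsWeightFun.isLittleO_id {ω : ℝ → ℝ} (hω : IsWeightFun ω)
    (hsq : ∃ H > 0, (fun t : ℝ => ω (t ^ 2)) =O[atTop] fun t : ℝ => ω (H * t)) :
    ω =o[atTop] (fun t : ℝ => t) := by
  obtain ⟨H, hH, hO⟩ := hsq
  have hHt : Tendsto (fun t : ℝ => H * t) atTop atTop := tendsto_id.const_mul_atTop hH
  have hsqrt : Tendsto Real.sqrt atTop atTop := Real.tendsto_sqrt_atTop
  have hback : (fun t : ℝ => ω (Real.sqrt t ^ 2)) =ᶠ[atTop] ω := by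
    filter_upwards [eventually_ge_atTop 0] with t ht
    rw [Real.sq_sqrt ht]
  have h1 : ω =O[atTop] (fun t : ℝ => t) := by
    have h2 : (fun t : ℝ => ω (H * t)) =O[atTop] fun t : ℝ => t ^ 2 := by
      refine (hω.beta.comp_tendsto hHt).trans ?_
      refine IsBigO.of_bound (H ^ 2) (Eventually.of_forall fun t => ?_)
      simp [mul_pow]
    refine hback.symm.trans_isBigO (((hO.trans h2).comp_tendsto hsqrt).trans ?_)
    refine IsBigO.of_bound 1 ?_
    filter_upwards [eventually_ge_atTop 0] with t ht
    simp [Real.sq_sqrt ht]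
  have h3 : ω =O[atTop] Real.sqrt := by
    have h2 : (fun t : ℝ => ω (H * t)) =O[atTop] fun t : ℝ => t := by
      refine (h1.comp_tendsto hHt).trans ?_
      refine IsBigO.of_bound H (Eventually.of_forall fun t => ?_)
      simp [abs_of_pos hH]
    exact hback.symm.trans_isBigO ((hO.trans h2).comp_tendsto hsqrt)
  refine h3.trans_isLittleO ?_
  refine IsLittleO.of_bound fun c hc => ?_
  filter_upwards [hsqrt.eventually_ge_atTop (1 / c), eventually_ge_atTop 0] with t ht ht0
  rw [Real.norm_of_nonneg (Real.sqrt_nonneg t), Real.norm_of_nonneg ht0]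
  rw [div_le_iff₀ hc] at ht
  nlinarith [Real.sq_sqrt ht0, Real.sqrt_nonneg t]

lemma IsGenWeightFun.exists_factorial_le {ω : ℝ → ℝ} (hω : IsGenWeightFun ω)
    (ho : ω =o[atTop] (fun t : ℝ => t)) {l : ℝ} (hl : 0 < l) :
    ∃ E : ℝ, 0 < E ∧ ∀ n : ℕ, 2 ^ n * (n.factorial : ℝ) ≤ E * wWeight ω l n := by
  obtain ⟨X, hX⟩ := Filter.eventually_atTop.1 (ho.bound (show (0 : ℝ) < l / 8 by positivity))
  set B := ω |X| / l with hB
  have hB0 : 0 ≤ B := div_nonneg (hω.nonneg _ (abs_nonneg X)) hl.le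
  have hb : ∀ x, 0 ≤ x → ω x / l ≤ x / 8 + B := by
    intro x hx
    rcases le_total X x with h | h
    · have := hX x h
      rw [Real.norm_of_nonneg (hω.nonneg x hx), Real.norm_of_nonneg hx] at this
      have h2 : ω x / l ≤ x / 8 := by
        rw [div_le_iff₀ hl]; linarith
      linarith
    · have h2 := hω.mono hx (abs_nonneg X) (h.trans (le_abs_self X))
      have h3 : ω x / l ≤ B := by rw [hB]; gcongr
      linarith
  refine ⟨Real.exp (1 + B), Real.exp_pos _, fun n => ?_⟩
  have hW := wWeight_pos ω l n
  rcases Nat.eq_zero_or_pos n with rfl | hn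
  · have h1 := hω.pow_le_wWeight hl le_rfl 0
    have h2 := hb 1 zero_le_one
    simp only [pow_zero, Nat.factorial_zero, Nat.cast_one, mul_one] at h1 ⊢
    refine h1.trans ?_
    gcongr
    linarith
  · have hn1 : (1 : ℝ) ≤ n := by exact_mod_cast hn
    -- Evaluating at `x = 4 n` leaves room for `exp (n / 2) ≤ 2 ^ n`.
    have h1 := hω.pow_le_wWeight hl (x := 4 * n) (by linarith) n
    have h2 := hb (4 * n) (by linarith)
    have h3 : Real.exp (ω (4 * n) / l) ≤ 2 ^ n * Real.exp (1 + B) := by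
      have h4 : Real.exp (1 / 2) ≤ 2 := by
        have h5 : Real.exp (1 / 2) ^ 2 ≤ 2 ^ 2 := by
          rw [← Real.exp_nat_mul]
          have := Real.exp_one_lt_d9
          norm_num
          linarith
        exact (pow_le_pow_iff_left₀ (Real.exp_pos _).le (by norm_num) (by norm_num)).1 h5
      calc Real.exp (ω (4 * n) / l) ≤ Real.exp (n * (1 / 2) + (1 + B)) := by
            gcongr; linarith
        _ = Real.exp (1 / 2) ^ n * Real.exp (1 + B) := by rw [Real.exp_add, Real.exp_nat_mul]
        _ ≤ _ := by gcongr
    have h6 : (n.factorial : ℝ) ≤ (n : ℝ) ^ n := by exact_mod_cast Nat.factorial_le_pow n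
    have h7 : (2 : ℝ) ^ n * (2 ^ n * n.factorial) ≤ 2 ^ n * (Real.exp (1 + B) * wWeight ω l n) := by
      calc (2 : ℝ) ^ n * (2 ^ n * n.factorial) ≤ 2 ^ n * (2 ^ n * (n : ℝ) ^ n) := by gcongr
        _ = (4 * n) ^ n := by rw [← mul_pow, ← mul_pow]; congr 1; ring
        _ ≤ _ := h1
        _ ≤ (2 ^ n * Real.exp (1 + B)) * wWeight ω l n := by gcongr
        _ = _ := by ring
    exact le_of_mul_le_mul_left h7 (by positivity)

/-- The seminorms of a Gaussian centred at `a` grow no faster than `exp (ω (2 a) / l)`. The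
doubling comes from `(a + |y|) ^ α ≤ (2 a) ^ α + (2 |y|) ^ α`. -/
lemma IsGenWeightFun.exists_gaussTrans_bound {ω : ℝ → ℝ} (hω : IsGenWeightFun ω)
    (ho : ω =o[atTop] (fun t : ℝ => t)) {l : ℝ} (hl : 0 < l) :
    ∃ K : ℝ, 0 < K ∧ ∀ a : ℝ, 1 ≤ a → ∀ (α β : Fin 1 → ℕ) (x : Fin 1 → ℝ),
      |mpow x α * mderiv β (gaussTrans a) x|
        ≤ K * Real.exp (ω (2 * a) / l) * wWeight ω l (msize α + msize β) := by
  obtain ⟨E, hE, hEn⟩ := hω.exists_factorial_le ho hl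
  refine ⟨4 * E, by positivity, fun a ha α β x => ?_⟩
  rw [mderiv_gaussTrans]
  simp only [mpow, msize, Finset.univ_unique, Finset.prod_singleton, Finset.sum_singleton,
    Fin.default_eq_zero]
  generalize α 0 = p
  generalize β 0 = q
  set y := x 0 - a with hy
  have hxy : |x 0| ≤ a + |y| := by
    have : x 0 = a + y := by rw [hy]; ring
    rw [this]
    refine (abs_add_le _ _).trans ?_
    rw [abs_of_nonneg (by linarith : 0 ≤ a)]
  have hpow : |x 0| ^ p ≤ (2 * a) ^ p + 2 ^ p * |y| ^ p := by
    have hy0 := abs_nonneg y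
    rw [← mul_pow]
    rcases le_total a |y| with h | h
    · have : |x 0| ^ p ≤ (2 * |y|) ^ p := by gcongr; linarith
      have : 0 ≤ (2 * a) ^ p := by positivity
      linarith
    · have : |x 0| ^ p ≤ (2 * a) ^ p := by gcongr; linarith
      have : 0 ≤ (2 * |y|) ^ p := by positivity
      linarith
  have hg0 := abs_pow_mul_gaussD_le q 0 y
  have hgp := abs_pow_mul_gaussD_le q p y
  rw [pow_zero, one_mul, zero_add, mul_assoc] at hg0
  have hw := hω.pow_le_wWeight hl (x := 2 * a) (by linarith) p
  set W := wWeight ω l (p + q) with hW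
  have hWpos : 0 < W := wWeight_pos _ _ _
  have hexp : 1 ≤ Real.exp (ω (2 * a) / l) :=
    Real.one_le_exp (div_nonneg (hω.nonneg _ (by linarith)) hl.le)
  have t1 : (2 * a) ^ p * |gaussD q y| ≤ 2 * E * Real.exp (ω (2 * a) / l) * W := by
    calc (2 * a) ^ p * |gaussD q y|
        ≤ (Real.exp (ω (2 * a) / l) * wWeight ω l p) * (2 * (E * wWeight ω l q)) := by
          refine mul_le_mul hw (hg0.trans ?_) (abs_nonneg _)
            (mul_pos (Real.exp_pos _) (wWeight_pos _ _ _)).le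
          exact mul_le_mul_of_nonneg_left (hEn q) zero_le_two
      _ = 2 * E * Real.exp (ω (2 * a) / l) * (wWeight ω l p * wWeight ω l q) := by ring
      _ ≤ _ := mul_le_mul_of_nonneg_left (hω.wWeight_mul_le hl p q) (by positivity)
  have t2 : 2 ^ p * |y| ^ p * |gaussD q y| ≤ 2 * E * Real.exp (ω (2 * a) / l) * W := by
    calc 2 ^ p * |y| ^ p * |gaussD q y| = 2 ^ p * (|y| ^ p * |gaussD q y|) := by ring
      _ ≤ 2 ^ p * (2 * 2 ^ q * (p + q).factorial) := by gcongr
      _ = 2 * (2 ^ (p + q) * (p + q).factorial) := by rw [pow_add]; ring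
      _ ≤ 2 * (E * W) := mul_le_mul_of_nonneg_left (hEn _) zero_le_two
      _ = 2 * E * W * 1 := by ring
      _ ≤ 2 * E * W * Real.exp (ω (2 * a) / l) := by gcongr
      _ = _ := by ring
  calc |x 0 ^ p * gaussD q y| = |x 0| ^ p * |gaussD q y| := by rw [abs_mul, abs_pow]
    _ ≤ ((2 * a) ^ p + 2 ^ p * |y| ^ p) * |gaussD q y| := by gcongr
    _ = (2 * a) ^ p * |gaussD q y| + 2 ^ p * |y| ^ p * |gaussD q y| := by ring
    _ ≤ 4 * E * Real.exp (ω (2 * a) / l) * W := by linarith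

/-! ### From the inclusion to domination of weights -/

/-- Testing the continuity estimate on Gaussians centred at `a`, at the point `x = a` and without
derivatives, bounds `sup_k a ^ k / exp (φ*_σ k)`, hence `σ a`, in terms of `ω (2 a)`. -/
lemma isBigO_of_contIncBW {ω σ : ℝ → ℝ} (hω : IsGenWeightFun ω)
    (ho : ω =o[atTop] (fun t : ℝ => t)) (hσ : IsGenWeightFun σ) (hc : contIncBW ω σ 1) :
    σ =O[atTop] ω := by
  obtain ⟨ν, hν, C, hC, h⟩ := hc 1 one_pos
  obtain ⟨K, hK, hKb⟩ := hω.exists_gaussTrans_bound ho hν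
  obtain ⟨L, hL, hLb⟩ := hω.alpha
  have hmem : ∀ a : ℝ, 1 ≤ a → gaussTrans a ∈ SBeurlingW ω 1 := fun a ha => by
    refine ⟨contDiff_gaussTrans a, fun l hl => ?_⟩
    obtain ⟨K', hK', hb⟩ := hω.exists_gaussTrans_bound ho hl
    exact ⟨_, by positivity, hb a ha⟩
  have key : ∀ a : ℝ, 1 < a →
      σ a ≤ Real.log a + (Real.log C + Real.log K + L * (ω a + 1) / ν) := by
    intro a ha
    obtain ⟨k, hk⟩ := hσ.exists_nat_le ha
    have h1 := h _ (hmem a ha.le) _ (by positivity) (hKb a ha.le) (fun _ => k) (fun _ => 0)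
      (fun _ => a)
    rw [mderiv_gaussTrans] at h1
    simp only [mpow, msize, Finset.univ_unique, Finset.prod_singleton, Finset.sum_singleton,
      sub_self, add_zero, wWeight, one_mul, div_one] at h1
    have e : gaussD 0 0 = 1 := by simp [gaussD]
    have ha0 : 0 < a := by linarith
    rw [e, mul_one, abs_of_pos (pow_pos ha0 k)] at h1
    have h2 := Real.log_le_log (pow_pos ha0 k) h1
    have hC0 : C ≠ 0 := by linarith
    rw [Real.log_pow, Real.log_mul (by positivity) (by positivity), Real.log_exp,
      Real.log_mul hC0 (by positivity), Real.log_mul hK.ne' (by positivity), Real.log_exp] at h2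
    have h3 : ω (2 * a) / ν ≤ L * (ω a + 1) / ν := by
      gcongr
      exact hLb a ha0.le
    linarith
  -- Since `log = o(ω)`, both `log a` and the constants are eventually at most a multiple of `ω a`.
  set M := |Real.log C + Real.log K + L / ν| with hM
  refine IsBigO.of_bound (1 + M + L / ν) ?_
  filter_upwards [hω.gamma.bound one_pos, eventually_gt_atTop 1,
    Real.tendsto_log_atTop.eventually_ge_atTop 1] with a h1 ha hlog
  have hω0 := hω.nonneg a (by linarith)
  rw [Real.norm_of_nonneg (by linarith), Real.norm_of_nonneg hω0, one_mul] at h1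
  rw [Real.norm_of_nonneg (hσ.nonneg a (by linarith)), Real.norm_of_nonneg hω0]
  have h2 := key a ha
  have h3 : L * (ω a + 1) / ν = L / ν * ω a + L / ν := by ring
  have h4 := le_abs_self (Real.log C + Real.log K + L / ν)
  have h5 : M ≤ M * ω a := le_mul_of_one_le_right (abs_nonneg _) (by linarith)
  rw [h3] at h2
  nlinarith

/-- Theorem `Beurlingpropweightfct`: let `ω` be a weight function with
`ω(t²) = O(ω(Ht))` for some `H > 0`, and `σ` a general weight function; then
`σ(t) = O(ω(t))` iff `S_(ω)(ℝ^d) ⊆ S_(σ)(ℝ^d)` with continuous inclusion for every `d`;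
the forward implication holds for arbitrary general weight functions and the converse
needs only `d = 1`. -/
theorem beurling_inclusion_weight_function_square_condition (ω σ : ℝ → ℝ) :
    ((IsGenWeightFun ω ∧ IsGenWeightFun σ ∧ σ =O[Filter.atTop] ω) →
      ∀ d : ℕ, 0 < d → SBeurlingW ω d ⊆ SBeurlingW σ d ∧ contIncBW ω σ d) ∧
    (IsWeightFun ω →
      (∃ H > 0, (fun t : ℝ => ω (t ^ 2)) =O[Filter.atTop] fun t : ℝ => ω (H * t)) →
      IsGenWeightFun σ →
      ((σ =O[Filter.atTop] ω ↔
          ∀ d : ℕ, 0 < d → SBeurlingW ω d ⊆ SBeurlingW σ d ∧ contIncBW ω σ d) ∧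
        ((SBeurlingW ω 1 ⊆ SBeurlingW σ 1 ∧ contIncBW ω σ 1) → σ =O[Filter.atTop] ω))) := by
  refine ⟨fun ⟨hω, hσ, hO⟩ d _ => inclusion_of_isBigO hω hσ hO d, fun hω hsq hσ => ?_⟩
  have hconv : contIncBW ω σ 1 → σ =O[Filter.atTop] ω :=
    isBigO_of_contIncBW hω.toIsGenWeightFun (hω.isLittleO_id hsq) hσ
  exact ⟨⟨fun hO d _ => inclusion_of_isBigO hω.toIsGenWeightFun hσ hO d,
    fun h => hconv (h 1 one_pos).2⟩, fun h => hconv h.2⟩
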